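/- There exists a constant C₀ ∈ (1,∞) such that for every inverse temperature β ∈ (0,∞) and every integer N ≥ 1, the variance of the height at the origin of the two-dimensional integer-valued Gaussian free field on the rectangle Λ_N at inverse temperature C₀β is bounded above by the variance of the height at the origin of the discrete Gaussian long-range chain of length N with range exponent 2 at inverse temperature β: Var^{2D-IVGFF}_{N,C₀β}[φ(0)] ≤ Var_{N,β,2}[φ(0)]. -/

import Mathlib

noncomputable section

/-- Configurations of the long-range chain of length `N`: integer-valued height functions
on `ℤ` vanishing outside `{-N, …, N}`. -/
def ChainConfig (N : ℕ) : Type :=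
  {φ : ℤ → ℤ // ∀ k : ℤ, (N : ℤ) < |k| → φ k = 0}

/-- Energy `β ∑_{i ≠ j} |φ(i) − φ(j)|^q / |i − j|^α` of a configuration of the long-range
chain with potential exponent `q` and range exponent `α`. -/
def chainEnergy (β α q : ℝ) (φ : ℤ → ℤ) : ℝ :=
  β * ∑' p : ℤ × ℤ,
      if p.1 = p.2 then 0
      else |((φ p.1 - φ p.2 : ℤ) : ℝ)| ^ q / |((p.1 - p.2 : ℤ) : ℝ)| ^ α

/-- Boltzmann weight of a configuration. -/
def chainWeight (β α q : ℝ) (φ : ℤ → ℤ) : ℝ :=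
  Real.exp (-chainEnergy β α q φ)

/-- Partition function of the long-range chain. -/
def chainZ (N : ℕ) (β α q : ℝ) : ℝ :=
  ∑' φ : ChainConfig N, chainWeight β α q φ.val

/-- Mean of the height at the origin. -/
def chainMean (N : ℕ) (β α q : ℝ) : ℝ :=
  (∑' φ : ChainConfig N, ((φ.val 0 : ℤ) : ℝ) * chainWeight β α q φ.val) / chainZ N β α q

/-- Variance of the height at the origin under the long-range chain `μ_{N,β,α}`
(with potential exponent `q`; `q = 2` is the discrete Gaussian chain,
`q ∈ (0,2)` the `q`-SOS chain). -/
def chainVar (N : ℕ) (β α q : ℝ) : ℝ :=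
  (∑' φ : ChainConfig N, ((φ.val 0 : ℤ) : ℝ) ^ 2 * chainWeight β α q φ.val) / chainZ N β α q
    - chainMean N β α q ^ 2

end

noncomputable section

/-- The two-dimensional rectangle `Λ_N = {-N,…,N} × {-2N,…,2N} ⊆ ℤ²`. -/
def rect (N : ℕ) : Set (ℤ × ℤ) :=
  {v : ℤ × ℤ | |v.1| ≤ (N : ℤ) ∧ |v.2| ≤ 2 * (N : ℤ)}

/-- Configurations of the two-dimensional integer-valued Gaussian free field on `Λ_N`
with Dirichlet boundary condition: integer-valued height functions on `ℤ²` vanishing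
outside `Λ_N` (in particular on the external boundary `∂Λ_N`). -/
def Config2D (N : ℕ) : Type :=
  {φ : ℤ × ℤ → ℤ // ∀ v : ℤ × ℤ, v ∉ rect N → φ v = 0}

/-- Energy `β ∑_{x∼y} (φ(x)−φ(y))²` of a configuration, the sum running over
nearest-neighbour pairs (each unordered pair counted once, whence the factor `1/2`). -/
def energy2D (β : ℝ) (φ : ℤ × ℤ → ℤ) : ℝ :=
  β * ((1 : ℝ) / 2 *
    ∑' p : (ℤ × ℤ) × (ℤ × ℤ),
      if |p.1.1 - p.2.1| + |p.1.2 - p.2.2| = 1 then ((φ p.1 - φ p.2 : ℤ) : ℝ) ^ 2 else 0)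

/-- Boltzmann weight of a configuration of the 2D integer-valued Gaussian free field. -/
def weight2D (β : ℝ) (φ : ℤ × ℤ → ℤ) : ℝ := Real.exp (-energy2D β φ)

/-- Partition function of the 2D integer-valued Gaussian free field on `Λ_N`. -/
def Z2D (N : ℕ) (β : ℝ) : ℝ := ∑' φ : Config2D N, weight2D β φ.val

/-- Mean of the height at the origin of the 2D integer-valued Gaussian free field. -/
def mean2D (N : ℕ) (β : ℝ) : ℝ :=
  (∑' φ : Config2D N, ((φ.val (0, 0) : ℤ) : ℝ) * weight2D β φ.val) / Z2D N β

/-- Variance of the height at the origin of the 2D integer-valued Gaussian free field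
at inverse temperature `β` on the rectangle `Λ_N`. -/
def var2D (N : ℕ) (β : ℝ) : ℝ :=
  (∑' φ : Config2D N, ((φ.val (0, 0) : ℤ) : ℝ) ^ 2 * weight2D β φ.val) / Z2D N β
    - mean2D N β ^ 2

end

/-!
The two models are compared through their quadratic energies on the height functions on `ℤ²`
vanishing outside `Λ_N`.

*Trace inequality.* The long-range chain energy of the restriction of `f` to the line `ℤ × {0}` is
at most `48` times the Dirichlet energy of `f`: to compare two sites of the line at distance `m`,
walk up by `m`, across by `m` and down by `m`. The vertical walks are controlled by the discrete
Hardy inequality, and the horizontal ones by Cauchy–Schwarz.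

*Monotonicity.* The second moment of an additive observable `u` under an integer-valued Gaussian
measure decreases when a square `v ^ 2` is added to its energy. Duplicating the variables and
passing to `p = x + y` and `q = x - y` reduces this to the positive definiteness of the kernel
`sinh (v p * v q / 2)` on each coset of twice the lattice.

*Decoupling.* The Dirichlet energy also dominates a small multiple of the squared heights off the
line. Under the chain energy on the line plus such a multiple, the heights on the line form the
chain, independently of the other heights, so monotonicity gives the comparison of second moments.
The constant `192 = 2 * (48 + 48)` pays for the factor `1 / 2` in the field energy, the trace
inequality and the decoupling term. The chain has mean zero by symmetry.
-/

noncomputable section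

/-! ### Second moments of Gibbs measures -/

section GibbsSecondMoment

/-- The second moment of the observable `u` under the Gibbs measure on the discrete space `X` with
weights `exp (-E x)`. -/
def gibbsSecondMoment {X : Type*} (E u : X → ℝ) : ℝ :=
  (∑' x, u x ^ 2 * Real.exp (-E x)) / ∑' x, Real.exp (-E x)

theorem gibbsSecondMoment_comp_equiv {X Y : Type*} (e : X ≃ Y) (E u : Y → ℝ) :
    gibbsSecondMoment (fun x => E (e x)) (fun x => u (e x)) = gibbsSecondMoment E u :=
  congrArg₂ (· / ·) (e.tsum_eq fun y => u y ^ 2 * Real.exp (-E y))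
    (e.tsum_eq fun y => Real.exp (-E y))

variable {X Y : Type*} {E u : X → ℝ} {E' : Y → ℝ}

theorem exp_neg_add_eq_mul (x : X) (y : Y) :
    Real.exp (-(E x + E' y)) = Real.exp (-E x) * Real.exp (-E' y) := by
  rw [neg_add, Real.exp_add]

theorem summable_exp_neg_add_prod (hE : Summable fun x => Real.exp (-E x))
    (hE' : Summable fun y => Real.exp (-E' y)) :
    Summable fun p : X × Y => Real.exp (-(E p.1 + E' p.2)) := by
  simp only [exp_neg_add_eq_mul]
  exact hE.mul_of_nonneg hE' (fun _ => (Real.exp_pos _).le) fun _ => (Real.exp_pos _).le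

theorem summable_sq_mul_exp_neg_add_prod (hu : Summable fun x => u x ^ 2 * Real.exp (-E x))
    (hE' : Summable fun y => Real.exp (-E' y)) :
    Summable fun p : X × Y => u p.1 ^ 2 * Real.exp (-(E p.1 + E' p.2)) := by
  simp only [exp_neg_add_eq_mul, ← mul_assoc]
  exact hu.mul_of_nonneg hE' (fun _ => by positivity) fun _ => (Real.exp_pos _).le

theorem gibbsSecondMoment_add_prod [Nonempty Y] (hE : Summable fun x => Real.exp (-E x))
    (hu : Summable fun x => u x ^ 2 * Real.exp (-E x))
    (hE' : Summable fun y => Real.exp (-E' y)) :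
    gibbsSecondMoment (fun p : X × Y => E p.1 + E' p.2) (fun p => u p.1) =
      gibbsSecondMoment E u := by
  have hE'_pos : 0 < ∑' y, Real.exp (-E' y) :=
    hE'.tsum_pos (fun _ => (Real.exp_pos _).le) (Classical.arbitrary Y) (Real.exp_pos _)
  have hZ : ∑' p : X × Y, Real.exp (-(E p.1 + E' p.2)) =
      (∑' x, Real.exp (-E x)) * ∑' y, Real.exp (-E' y) := by
    have hsum := summable_exp_neg_add_prod hE hE'
    simp only [exp_neg_add_eq_mul] at hsum ⊢
    exact (hE.tsum_mul_tsum hE' hsum).symm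
  have hM : ∑' p : X × Y, u p.1 ^ 2 * Real.exp (-(E p.1 + E' p.2)) =
      (∑' x, u x ^ 2 * Real.exp (-E x)) * ∑' y, Real.exp (-E' y) := by
    have hsum := summable_sq_mul_exp_neg_add_prod hu hE'
    simp only [exp_neg_add_eq_mul, ← mul_assoc] at hsum ⊢
    exact (hu.tsum_mul_tsum hE' hsum).symm
  rw [gibbsSecondMoment, hZ, hM, mul_div_mul_right _ _ hE'_pos.ne', gibbsSecondMoment]

end GibbsSecondMoment

/-! ### Positive definiteness of the hyperbolic sine kernel -/

section SinhKernel

variable {α : Type*}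

theorem sum_sum_mul_sinh_nonneg (s : Finset α) (F w : α → ℝ) {t : ℝ} (ht : 0 ≤ t) :
    0 ≤ ∑ a ∈ s, ∑ b ∈ s, F a * F b * Real.sinh (t * (w a * w b)) := by
  have hseries : HasSum
      (fun k : ℕ => ∑ a ∈ s, ∑ b ∈ s,
        F a * F b * ((t * (w a * w b)) ^ (2 * k + 1) / ((2 * k + 1).factorial : ℝ)))
      (∑ a ∈ s, ∑ b ∈ s, F a * F b * Real.sinh (t * (w a * w b))) :=
    hasSum_sum fun a _ => hasSum_sum fun b _ => (Real.hasSum_sinh _).mul_left _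
  refine hseries.nonneg fun k => ?_
  have hsquare : ∑ a ∈ s, ∑ b ∈ s,
        F a * F b * ((t * (w a * w b)) ^ (2 * k + 1) / ((2 * k + 1).factorial : ℝ)) =
      t ^ (2 * k + 1) / ((2 * k + 1).factorial : ℝ) *
        (∑ a ∈ s, F a * w a ^ (2 * k + 1)) ^ 2 := by
    simp_rw [sq, Finset.sum_mul_sum, Finset.mul_sum]
    exact Finset.sum_congr rfl fun a _ => Finset.sum_congr rfl fun b _ => by ring
  rw [hsquare]
  positivity

theorem sum_sum_ite_fiber {γ : Type*} [DecidableEq γ] (s : Finset α) (π : α → γ)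
    (K : α → α → ℝ) :
    ∑ a ∈ s, ∑ b ∈ s, (if π a = π b then K a b else 0) =
      ∑ c ∈ s.image π, ∑ a ∈ s with π a = c, ∑ b ∈ s with π b = c, K a b := by
  rw [← Finset.sum_fiberwise_of_maps_to fun a ha => Finset.mem_image_of_mem π ha]
  refine Finset.sum_congr rfl fun c _ => Finset.sum_congr rfl fun a ha => ?_
  simp only [Finset.sum_filter, (Finset.mem_filter.mp ha).2, eq_comm]

theorem tsum_prod_nonneg_of_sum_sum_nonneg {K : α × α → ℝ} (hK : Summable K)
    (hnonneg : ∀ s : Finset α, 0 ≤ ∑ a ∈ s, ∑ b ∈ s, K (a, b)) : 0 ≤ ∑' p, K p := by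
  have hsquares : Filter.Tendsto (fun s : Finset α => s ×ˢ s) Filter.atTop Filter.atTop :=
    Filter.tendsto_finsetProd_atTop.comp Filter.tendsto_atTop_diagonal
  refine ge_of_tendsto' (hK.hasSum.comp hsquares) fun s => ?_
  simpa only [Function.comp_apply, Finset.sum_product] using hnonneg s

variable {G : Type*} [AddCommGroup G]

theorem exists_add_sub_eq_iff (p q : G) :
    (∃ x y : G, x + y = p ∧ x - y = q) ↔
      (p : G ⧸ (nsmulAddMonoidHom 2 : G →+ G).range) = q := by
  rw [eq_comm, QuotientAddGroup.eq, AddMonoidHom.mem_range]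
  constructor
  · rintro ⟨x, y, rfl, rfl⟩
    exact ⟨y, by simp only [nsmulAddMonoidHom_apply]; abel⟩
  · rintro ⟨y, hy⟩
    rw [nsmulAddMonoidHom_apply, two_nsmul] at hy
    exact ⟨q + y, y, by rw [add_assoc, hy]; abel, by abel⟩

theorem injective_add_sub [IsAddTorsionFree G] :
    Function.Injective fun p : G × G => (p.1 + p.2, p.1 - p.2) := by
  rintro ⟨x, y⟩ ⟨x', y'⟩ h
  obtain ⟨hadd, hsub⟩ := Prod.mk.inj h
  have hx : x = x' := by
    refine nsmul_right_injective two_ne_zero ?_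
    calc 2 • x = (x + y) + (x - y) := by abel
      _ = (x' + y') + (x' - y') := by rw [hadd, hsub]
      _ = 2 • x' := by abel
  subst hx
  exact Prod.ext rfl (add_left_cancel hadd)

-- The pairs `(x + y, x - y)` are exactly the pairs in a common coset of `2G`, so the sum splits
-- into one positive semidefinite block per coset.
theorem tsum_mul_sinh_add_sub_nonneg [IsAddTorsionFree G] (F w : G → ℝ) {t : ℝ} (ht : 0 ≤ t)
    (hs : Summable fun p : G × G => F (p.1 + p.2) * F (p.1 - p.2) *
      Real.sinh (t * (w (p.1 + p.2) * w (p.1 - p.2)))) :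
    0 ≤ ∑' p : G × G, F (p.1 + p.2) * F (p.1 - p.2) *
      Real.sinh (t * (w (p.1 + p.2) * w (p.1 - p.2))) := by
  classical
  let π : G → G ⧸ (nsmulAddMonoidHom 2 : G →+ G).range := QuotientAddGroup.mk
  let K : G × G → ℝ := fun p =>
    if π p.1 = π p.2 then F p.1 * F p.2 * Real.sinh (t * (w p.1 * w p.2)) else 0
  have hK_comp : (fun p : G × G => F (p.1 + p.2) * F (p.1 - p.2) *
      Real.sinh (t * (w (p.1 + p.2) * w (p.1 - p.2)))) =
      K ∘ fun p : G × G => (p.1 + p.2, p.1 - p.2) := by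
    funext p
    exact (if_pos ((exists_add_sub_eq_iff _ _).mp ⟨p.1, p.2, rfl, rfl⟩)).symm
  have hK_support : ∀ p ∉ Set.range fun p : G × G => (p.1 + p.2, p.1 - p.2), K p = 0 := by
    refine fun p hp => if_neg fun hπ => hp ?_
    obtain ⟨x, y, hadd, hsub⟩ := (exists_add_sub_eq_iff _ _).mpr hπ
    exact ⟨(x, y), Prod.ext hadd hsub⟩
  rw [hK_comp] at hs ⊢
  have hK : Summable K := (injective_add_sub.summable_iff hK_support).mp hs
  have htsum : ∑' p : G × G, (K ∘ fun p : G × G => (p.1 + p.2, p.1 - p.2)) p = ∑' p, K p :=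
    injective_add_sub.tsum_eq fun p hp => by_contra fun hmem => hp (hK_support p hmem)
  rw [htsum]
  refine tsum_prod_nonneg_of_sum_sum_nonneg hK fun s => ?_
  rw [sum_sum_ite_fiber s π fun a b => F a * F b * Real.sinh (t * (w a * w b))]
  exact Finset.sum_nonneg fun c _ => sum_sum_mul_sinh_nonneg _ F w ht

end SinhKernel

/-! ### Monotonicity of the second moment in the energy -/

section Monotonicity

variable {G : Type*} [AddCommGroup G]

-- With `p = x + y` and `q = x - y`, both sides are functions of `p` and `q` by the parallelogram
-- law, because `u x ^ 2 - u y ^ 2 = u p * u q` and `v x ^ 2 - v y ^ 2 = v p * v q`.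
theorem sq_sub_sq_mul_exp_sub_eq_sinh {B : G → ℝ} (u v : G →+ ℝ)
    (hB : ∀ x y, B (x + y) + B (x - y) = 2 * (B x + B y)) (x y : G) :
    (u x ^ 2 - u y ^ 2) * (Real.exp (-B x) * Real.exp (-(B y + v y ^ 2)) -
        Real.exp (-(B x + v x ^ 2)) * Real.exp (-B y)) =
      2 * ((u (x + y) * Real.exp (-(B (x + y) / 2 + v (x + y) ^ 2 / 4))) *
        (u (x - y) * Real.exp (-(B (x - y) / 2 + v (x - y) ^ 2 / 4))) *
        Real.sinh (1 / 2 * (v (x + y) * v (x - y)))) := by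
  have hpos : Real.exp (-(B (x + y) / 2 + (v x + v y) ^ 2 / 4)) *
      Real.exp (-(B (x - y) / 2 + (v x - v y) ^ 2 / 4)) *
      Real.exp (1 / 2 * ((v x + v y) * (v x - v y))) =
      Real.exp (-B x) * Real.exp (-(B y + v y ^ 2)) := by
    simp only [← Real.exp_add]
    congr 1
    linear_combination -(hB x y) / 2
  have hneg : Real.exp (-(B (x + y) / 2 + (v x + v y) ^ 2 / 4)) *
      Real.exp (-(B (x - y) / 2 + (v x - v y) ^ 2 / 4)) *
      Real.exp (-(1 / 2 * ((v x + v y) * (v x - v y)))) =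
      Real.exp (-(B x + v x ^ 2)) * Real.exp (-B y) := by
    simp only [← Real.exp_add]
    congr 1
    linear_combination -(hB x y) / 2
  rw [map_add, map_add, map_sub, map_sub, Real.sinh_eq, ← hpos, ← hneg]
  ring

theorem summable_exp_neg_of_le {X : Type*} {E E' : X → ℝ} (hle : ∀ x, E x ≤ E' x)
    (hE : Summable fun x => Real.exp (-E x)) : Summable fun x => Real.exp (-E' x) :=
  hE.of_nonneg_of_le (fun _ => (Real.exp_pos _).le) fun x =>
    Real.exp_le_exp.mpr (neg_le_neg (hle x))

theorem summable_sq_mul_exp_neg_of_le {X : Type*} {E E' u : X → ℝ} (hle : ∀ x, E x ≤ E' x)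
    (hE : Summable fun x => u x ^ 2 * Real.exp (-E x)) :
    Summable fun x => u x ^ 2 * Real.exp (-E' x) := by
  refine hE.of_nonneg_of_le (fun _ => by positivity) fun x => ?_
  gcongr
  exact hle x

theorem hasSum_sub_mul_mul_sub_mul {X : Type*} {e g h : X → ℝ} (he : Summable e) (hg : Summable g)
    (hhe : Summable fun x => h x * e x) (hhg : Summable fun x => h x * g x)
    (he0 : ∀ x, 0 ≤ e x) (hg0 : ∀ x, 0 ≤ g x) (hh0 : ∀ x, 0 ≤ h x) :
    HasSum (fun p : X × X => (h p.1 - h p.2) * (e p.1 * g p.2 - g p.1 * e p.2))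
      (2 * ((∑' x, h x * e x) * (∑' x, g x) - (∑' x, h x * g x) * ∑' x, e x)) := by
  have hasSum_mul {a b : X → ℝ} (ha : Summable a) (hb : Summable b) (ha0 : ∀ x, 0 ≤ a x)
      (hb0 : ∀ x, 0 ≤ b x) :
      HasSum (fun p : X × X => a p.1 * b p.2) ((∑' x, a x) * ∑' x, b x) :=
    ha.hasSum.mul hb.hasSum (ha.mul_of_nonneg hb ha0 hb0)
  have hhe0 x : 0 ≤ h x * e x := mul_nonneg (hh0 x) (he0 x)
  have hhg0 x : 0 ≤ h x * g x := mul_nonneg (hh0 x) (hg0 x)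
  have hsum := ((hasSum_mul hhe hg hhe0 hg0).sub (hasSum_mul hhg he hhg0 he0)).add
    ((hasSum_mul hg hhe hg0 hhe0).sub (hasSum_mul he hhg he0 hhg0))
  have hval : 2 * ((∑' x, h x * e x) * (∑' x, g x) - (∑' x, h x * g x) * ∑' x, e x) =
      (∑' x, h x * e x) * (∑' x, g x) - (∑' x, h x * g x) * (∑' x, e x) +
        ((∑' x, g x) * (∑' x, h x * e x) - (∑' x, e x) * ∑' x, h x * g x) := by
    ring
  rw [hval]
  exact hsum.congr_fun fun p => by ring

theorem gibbsSecondMoment_add_sq_le [IsAddTorsionFree G] {B : G → ℝ} (u v : G →+ ℝ)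
    (hB : ∀ x y, B (x + y) + B (x - y) = 2 * (B x + B y))
    (hs : Summable fun x => Real.exp (-B x))
    (hu : Summable fun x => u x ^ 2 * Real.exp (-B x)) :
    gibbsSecondMoment (fun x => B x + v x ^ 2) u ≤ gibbsSecondMoment B u := by
  have hle (x : G) : B x ≤ B x + v x ^ 2 := le_add_of_nonneg_right (sq_nonneg _)
  have hs' := summable_exp_neg_of_le hle hs
  have hu' := summable_sq_mul_exp_neg_of_le hle hu
  have hsym := hasSum_sub_mul_mul_sub_mul hs hs' hu hu' (fun _ => (Real.exp_pos _).le)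
    (fun _ => (Real.exp_pos _).le) fun _ => sq_nonneg _
  simp only [sq_sub_sq_mul_exp_sub_eq_sinh u v hB] at hsym
  have hnonneg : 0 ≤ (∑' x, u x ^ 2 * Real.exp (-B x)) * (∑' x, Real.exp (-(B x + v x ^ 2))) -
      (∑' x, u x ^ 2 * Real.exp (-(B x + v x ^ 2))) * ∑' x, Real.exp (-B x) := by
    have hkernel := tsum_mul_sinh_add_sub_nonneg
      (fun x => u x * Real.exp (-(B x / 2 + v x ^ 2 / 4))) v one_half_pos.le
      ((summable_mul_left_iff two_ne_zero).mp hsym.summable)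
    rw [← mul_nonneg_iff_of_pos_left two_pos, ← hsym.tsum_eq, tsum_mul_left]
    exact mul_nonneg two_pos.le hkernel
  rw [gibbsSecondMoment, gibbsSecondMoment,
    div_le_div_iff₀ (hs'.tsum_pos (fun _ => (Real.exp_pos _).le) 0 (Real.exp_pos _))
      (hs.tsum_pos (fun _ => (Real.exp_pos _).le) 0 (Real.exp_pos _))]
  exact sub_nonneg.mp hnonneg

theorem sum_sq_add_add_sum_sq_sub {κ : Type*} (s : Finset κ) (v : κ → G →+ ℝ) (x y : G) :
    ∑ k ∈ s, v k (x + y) ^ 2 + ∑ k ∈ s, v k (x - y) ^ 2 =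
      2 * (∑ k ∈ s, v k x ^ 2 + ∑ k ∈ s, v k y ^ 2) := by
  rw [← Finset.sum_add_distrib, ← Finset.sum_add_distrib, Finset.mul_sum]
  refine Finset.sum_congr rfl fun k _ => ?_
  rw [map_add, map_sub]
  ring

theorem gibbsSecondMoment_add_sum_sq_le [IsAddTorsionFree G] {κ : Type*} {B : G → ℝ}
    (u : G →+ ℝ) (v : κ → G →+ ℝ) (hB : ∀ x y, B (x + y) + B (x - y) = 2 * (B x + B y))
    (hs : Summable fun x => Real.exp (-B x))
    (hu : Summable fun x => u x ^ 2 * Real.exp (-B x)) (s : Finset κ) :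
    gibbsSecondMoment (fun x => B x + ∑ k ∈ s, v k x ^ 2) u ≤ gibbsSecondMoment B u := by
  classical
  induction s using Finset.induction_on with
  | empty => simp only [Finset.sum_empty, add_zero, le_refl]
  | insert k s hk ih =>
    have hparallelogram (x y : G) :
        (B (x + y) + ∑ k ∈ s, v k (x + y) ^ 2) + (B (x - y) + ∑ k ∈ s, v k (x - y) ^ 2) =
        2 * ((B x + ∑ k ∈ s, v k x ^ 2) + (B y + ∑ k ∈ s, v k y ^ 2)) := by
      linear_combination hB x y + sum_sq_add_add_sum_sq_sub s v x y
    have hle (x : G) : B x ≤ B x + ∑ k ∈ s, v k x ^ 2 :=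
      le_add_of_nonneg_right (Finset.sum_nonneg fun _ _ => sq_nonneg _)
    have hstep := gibbsSecondMoment_add_sq_le u (v k) hparallelogram
      (summable_exp_neg_of_le hle hs) (summable_sq_mul_exp_neg_of_le hle hu)
    simp only [Finset.sum_insert hk, add_comm (v k _ ^ 2), ← add_assoc]
    exact hstep.trans ih

variable {V : Type*} [AddCommGroup V] [Module ℝ V]

theorem quadraticForm_map_add_add_map_sub (Q : QuadraticForm ℝ V) (x y : V) :
    Q (x + y) + Q (x - y) = 2 * (Q x + Q y) := by
  rw [sub_eq_add_neg, QuadraticMap.map_add Q x y, QuadraticMap.map_add Q x (-y),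
    QuadraticMap.polar_neg_right, QuadraticMap.map_neg]
  ring

theorem exists_eq_sum_sq_of_nonneg [FiniteDimensional ℝ V] {Q : QuadraticForm ℝ V}
    (hQ : ∀ x, 0 ≤ Q x) :
    ∃ v : Fin (Module.finrank ℝ V) → V →ₗ[ℝ] ℝ, ∀ x, Q x = ∑ k, v k x ^ 2 := by
  obtain ⟨w, ⟨e⟩⟩ := QuadraticForm.equivalent_weightedSumSquares Q
  have hQe (x : V) : Q x = ∑ k, w k * e x k ^ 2 := by
    rw [← e.map_app, QuadraticMap.weightedSumSquares_apply]
    exact Finset.sum_congr rfl fun k _ => by rw [smul_eq_mul, sq]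
  have hw (k : Fin (Module.finrank ℝ V)) : 0 ≤ w k := by
    have hQk := hQe (e.symm (Pi.single k 1))
    rw [e.apply_symm_apply, Finset.sum_eq_single_of_mem k (Finset.mem_univ k)
      fun l _ hl => by rw [Pi.single_eq_of_ne hl, zero_pow two_ne_zero, mul_zero],
      Pi.single_eq_same, one_pow, mul_one] at hQk
    exact hQk ▸ hQ _
  refine ⟨fun k => √(w k) • LinearMap.proj k ∘ₗ e.toLinearEquiv.toLinearMap, fun x => ?_⟩
  rw [hQe]
  refine Finset.sum_congr rfl fun k _ => ?_
  change w k * e x k ^ 2 = (√(w k) * e x k) ^ 2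
  rw [mul_pow, Real.sq_sqrt (hw k)]

theorem gibbsSecondMoment_anti [IsAddTorsionFree G] [FiniteDimensional ℝ V] (j : G →+ V)
    (u : G →+ ℝ) {Q₁ Q₂ : QuadraticForm ℝ V} (hle : ∀ x, Q₁ x ≤ Q₂ x)
    (hs : Summable fun x => Real.exp (-Q₁ (j x)))
    (hu : Summable fun x => u x ^ 2 * Real.exp (-Q₁ (j x))) :
    gibbsSecondMoment (fun x => Q₂ (j x)) u ≤ gibbsSecondMoment (fun x => Q₁ (j x)) u := by
  obtain ⟨v, hv⟩ := exists_eq_sum_sq_of_nonneg (Q := Q₂ - Q₁) fun x => sub_nonneg.mpr (hle x)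
  have hQ₂ (x : V) : Q₂ x = Q₁ x + ∑ k, v k x ^ 2 := by
    rw [← hv, sub_apply, add_sub_cancel]
  have hparallelogram (x y : G) :
      Q₁ (j (x + y)) + Q₁ (j (x - y)) = 2 * (Q₁ (j x) + Q₁ (j y)) := by
    rw [map_add j, map_sub j, quadraticForm_map_add_add_map_sub]
  simp only [hQ₂]
  exact gibbsSecondMoment_add_sum_sq_le u (fun k => (v k).toAddMonoidHom.comp j)
    hparallelogram hs hu Finset.univ

end Monotonicity

/-! ### Summability of Gaussian weights -/

section GaussianSummability

theorem summable_exp_neg_mul_sq_int {ε : ℝ} (hε : 0 < ε) :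
    Summable fun n : ℤ => Real.exp (-(ε * (n : ℝ) ^ 2)) := by
  have hnat : Summable fun n : ℕ => Real.exp (-(ε * (n : ℝ) ^ 2)) := by
    simpa only [neg_mul] using Real.summable_exp_nat_mul_of_ge (neg_lt_zero.mpr hε) fun n =>
      show (n : ℝ) ≤ (n : ℝ) ^ 2 by exact_mod_cast Nat.le_self_pow two_ne_zero n
  refine Summable.of_nat_of_neg ?_ ?_
  · simpa only [Int.cast_natCast] using hnat
  · simpa only [Int.cast_neg, Int.cast_natCast, neg_sq] using hnat

theorem summable_prod_apply {ι β : Type*} [Fintype ι] {f : β → ℝ} (hf : Summable f)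
    (hf0 : ∀ b, 0 ≤ f b) : Summable fun x : ι → β => ∏ i, f (x i) := by
  classical
  refine summable_of_sum_le (c := ∏ _i : ι, ∑' b, f b)
    (fun x => Finset.prod_nonneg fun i _ => hf0 _) fun s => ?_
  calc ∑ x ∈ s, ∏ i, f (x i)
      ≤ ∑ x ∈ Fintype.piFinset fun i => s.image (· i), ∏ i, f (x i) := by
        refine Finset.sum_le_sum_of_subset_of_nonneg (fun x hx => ?_) fun x _ _ =>
          Finset.prod_nonneg fun i _ => hf0 _
        exact Fintype.mem_piFinset.mpr fun i => Finset.mem_image_of_mem _ hx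
    _ = ∏ i, ∑ b ∈ s.image (· i), f b := (Finset.prod_univ_sum _ _).symm
    _ ≤ ∏ _i : ι, ∑' b, f b := Finset.prod_le_prod
        (fun i _ => Finset.sum_nonneg fun b _ => hf0 b)
        fun i _ => hf.sum_le_tsum _ fun b _ => hf0 b

variable {X ι : Type*} [Fintype ι] {E u : X → ℝ}

theorem summable_exp_neg_mul_sum_sq {ε : ℝ} (hε : 0 < ε) :
    Summable fun h : ι → ℤ => Real.exp (-(ε * ∑ i, (h i : ℝ) ^ 2)) := by
  have hprod := summable_prod_apply (ι := ι) (summable_exp_neg_mul_sq_int hε) fun _ =>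
    (Real.exp_pos _).le
  simpa only [← Real.exp_sum, Finset.sum_neg_distrib, ← Finset.mul_sum] using hprod

theorem summable_exp_neg_of_mul_sum_sq_le {ε : ℝ} (hε : 0 < ε) {r : X → ι → ℤ}
    (hr : Function.Injective r) (hE : ∀ x, ε * ∑ i, (r x i : ℝ) ^ 2 ≤ E x) :
    Summable fun x => Real.exp (-E x) :=
  summable_exp_neg_of_le hE ((summable_exp_neg_mul_sum_sq hε).comp_injective hr)

theorem summable_sq_mul_exp_neg_of_sq_le {C : ℝ} (hu : ∀ x, u x ^ 2 ≤ C * E x) (hC : 0 ≤ C)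
    (hs : Summable fun x => Real.exp (-(E x / 2))) :
    Summable fun x => u x ^ 2 * Real.exp (-E x) := by
  refine (hs.mul_left (2 * C)).of_nonneg_of_le (fun _ => by positivity) fun x => ?_
  calc u x ^ 2 * Real.exp (-E x) ≤ C * E x * Real.exp (-E x) := by
        gcongr
        exact hu x
    _ = 2 * C * (E x / 2) * Real.exp (-E x) := by ring
    _ ≤ 2 * C * Real.exp (E x / 2) * Real.exp (-E x) := by
        gcongr
        exact (le_add_of_nonneg_right zero_le_one).trans (Real.add_one_le_exp _)
    _ = 2 * C * Real.exp (-(E x / 2)) := by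
        rw [mul_assoc, ← Real.exp_add]
        ring_nf

theorem exists_pos_mul_sum_sq_le {C : ℝ} (hC : 0 ≤ C) {r : X → ι → ℝ} (hE : ∀ x, 0 ≤ E x)
    (hr : ∀ x i, r x i ^ 2 ≤ C * E x) :
    ∃ ε : ℝ, 0 < ε ∧ ∀ x, ε * ∑ i, r x i ^ 2 ≤ E x := by
  have hK : 0 < Fintype.card ι * C + 1 := by positivity
  refine ⟨(Fintype.card ι * C + 1)⁻¹, inv_pos.mpr hK, fun x => (inv_mul_le_iff₀ hK).mpr ?_⟩
  calc ∑ i, r x i ^ 2 ≤ ∑ _i : ι, C * E x := Finset.sum_le_sum fun i _ => hr x i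
    _ = Fintype.card ι * C * E x := by
        rw [Finset.sum_const, Finset.card_univ, nsmul_eq_mul, mul_assoc]
    _ ≤ (Fintype.card ι * C + 1) * E x := by
        gcongr
        · exact hE x
        · exact le_add_of_nonneg_right zero_le_one

end GaussianSummability

/-! ### Quadratic forms given by sums of squares -/

section SumSqForm

variable {V P : Type*} [AddCommGroup V] [Module ℝ V]

theorem summable_mul_of_summable_sq {a b : P → ℝ} (ha : Summable fun p => a p ^ 2)
    (hb : Summable fun p => b p ^ 2) : Summable fun p => a p * b p := by
  refine Summable.of_norm_bounded (ha.add hb) fun p => ?_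
  rw [Real.norm_eq_abs, abs_le]
  constructor <;> nlinarith [sq_nonneg (a p + b p), sq_nonneg (a p - b p)]

/-- The quadratic form `∑ₚ (lₚ f)²` of a square-summable family of linear functionals, built from
its polarization `∑ₚ (lₚ f) (lₚ g)`. -/
def sumSqForm (l : P → V →ₗ[ℝ] ℝ) (hl : ∀ f, Summable fun p => l p f ^ 2) :
    QuadraticForm ℝ V :=
  LinearMap.BilinMap.toQuadraticMap <|
    LinearMap.mk₂ ℝ (fun f g => ∑' p, l p f * l p g)
      (fun f f' g => by
        simp only [map_add, add_mul]
        exact (summable_mul_of_summable_sq (hl f) (hl g)).tsum_add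
          (summable_mul_of_summable_sq (hl f') (hl g)))
      (fun c f g => by simp only [map_smul, smul_eq_mul, mul_assoc, tsum_mul_left])
      (fun f g g' => by
        simp only [map_add, mul_add]
        exact (summable_mul_of_summable_sq (hl f) (hl g)).tsum_add
          (summable_mul_of_summable_sq (hl f) (hl g')))
      (fun c f g => by simp only [map_smul, smul_eq_mul, mul_left_comm _ c, tsum_mul_left])

theorem sumSqForm_apply (l : P → V →ₗ[ℝ] ℝ) (hl : ∀ f, Summable fun p => l p f ^ 2) (f : V) :
    sumSqForm l hl f = ∑' p, l p f ^ 2 :=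
  tsum_congr fun _ => (sq _).symm

end SumSqForm

/-! ### The discrete trace inequality -/

section HardyInequality

-- The last summand on the left makes the induction close.
theorem sum_sq_average_add_le (a : ℕ → ℝ) (M : ℕ) :
    ∑ n ∈ Finset.range M, ((∑ k ∈ Finset.range (n + 1), a k) / ((n : ℝ) + 1)) ^ 2 +
        2 * (M : ℝ) * ((∑ k ∈ Finset.range M, a k) / (M : ℝ)) ^ 2 ≤
      4 * ∑ n ∈ Finset.range M, a n ^ 2 := by
  induction M with
  | zero => simp
  | succ M ih =>
    have hmean : (M : ℝ) * ((∑ k ∈ Finset.range M, a k) / (M : ℝ)) = ∑ k ∈ Finset.range M, a k := by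
      rcases eq_or_ne M 0 with rfl | hM
      · simp
      · exact mul_div_cancel₀ _ (Nat.cast_ne_zero.mpr hM)
    have hmean' : ((M : ℝ) + 1) * ((∑ k ∈ Finset.range (M + 1), a k) / ((M : ℝ) + 1)) =
        ∑ k ∈ Finset.range (M + 1), a k := mul_div_cancel₀ _ (by positivity)
    rw [Finset.sum_range_succ, Finset.sum_range_succ (fun n => a n ^ 2), Nat.cast_succ]
    generalize (∑ k ∈ Finset.range M, a k) / (M : ℝ) = A at ih hmean
    generalize (∑ k ∈ Finset.range (M + 1), a k) / ((M : ℝ) + 1) = A' at hmean' ⊢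
    have hlast : a M = ((M : ℝ) + 1) * A' - M * A := by
      rw [hmean, hmean', Finset.sum_range_succ, add_sub_cancel_left]
    have hdefect : (A' - 2 * a M) ^ 2 + 2 * M * (A - A') ^ 2 =
        4 * a M ^ 2 + 2 * M * A ^ 2 - (2 * M + 3) * A' ^ 2 := by
      rw [hlast]
      ring
    have hdefect_nonneg : 0 ≤ (A' - 2 * a M) ^ 2 + 2 * M * (A - A') ^ 2 := by positivity
    linarith

theorem enorm_sq_eq_ofReal_sq (x : ℝ) : ‖x‖ₑ ^ 2 = ENNReal.ofReal (x ^ 2) := by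
  rw [Real.enorm_eq_ofReal_abs, ← ENNReal.ofReal_pow (abs_nonneg x), sq_abs]

theorem tsum_enorm_sub_div_sq_le (g : ℕ → ℝ) :
    ∑' n : ℕ, ‖(g (n + 1) - g 0) / ((n : ℝ) + 1)‖ₑ ^ 2 ≤
      4 * ∑' k : ℕ, ‖g (k + 1) - g k‖ₑ ^ 2 := by
  refine ENNReal.tsum_le_of_sum_range_le fun M => ?_
  have hreal : ∑ n ∈ Finset.range M, ((g (n + 1) - g 0) / ((n : ℝ) + 1)) ^ 2 ≤
      4 * ∑ k ∈ Finset.range M, (g (k + 1) - g k) ^ 2 := by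
    have hfin := sum_sq_average_add_le (fun k => g (k + 1) - g k) M
    simp only [Finset.sum_range_sub] at hfin
    exact (le_add_of_nonneg_right (by positivity)).trans hfin
  calc ∑ n ∈ Finset.range M, ‖(g (n + 1) - g 0) / ((n : ℝ) + 1)‖ₑ ^ 2
      ≤ 4 * ∑ k ∈ Finset.range M, ‖g (k + 1) - g k‖ₑ ^ 2 := by
        simp only [enorm_sq_eq_ofReal_sq]
        rw [← ENNReal.ofReal_sum_of_nonneg fun _ _ => sq_nonneg _,
          ← ENNReal.ofReal_sum_of_nonneg fun _ _ => sq_nonneg _,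
          ← ENNReal.ofReal_ofNat 4, ← ENNReal.ofReal_mul (by norm_num)]
        exact ENNReal.ofReal_le_ofReal hreal
    _ ≤ 4 * ∑' k : ℕ, ‖g (k + 1) - g k‖ₑ ^ 2 := by
        gcongr
        exact ENNReal.sum_le_tsum _

end HardyInequality

section TraceInequality

theorem enorm_sum_sq_le_card_mul_sum {ι : Type*} (s : Finset ι) (a : ι → ℝ) :
    ‖∑ i ∈ s, a i‖ₑ ^ 2 ≤ s.card * ∑ i ∈ s, ‖a i‖ₑ ^ 2 := by
  simp only [enorm_sq_eq_ofReal_sq]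
  rw [← ENNReal.ofReal_sum_of_nonneg fun _ _ => sq_nonneg _, ← ENNReal.ofReal_natCast,
    ← ENNReal.ofReal_mul (Nat.cast_nonneg _)]
  exact ENNReal.ofReal_le_ofReal sq_sum_le_card_mul_sum_sq

theorem enorm_add_add_sq_le (a b c : ℝ) :
    ‖a + b + c‖ₑ ^ 2 ≤ 3 * (‖a‖ₑ ^ 2 + ‖b‖ₑ ^ 2 + ‖c‖ₑ ^ 2) := by
  simpa [Fin.sum_univ_three] using enorm_sum_sq_le_card_mul_sum Finset.univ ![a, b, c]

theorem tsum_add_right_int (F : ℤ → ENNReal) (m : ℤ) : ∑' i, F (i + m) = ∑' i, F i :=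
  (Equiv.addRight m).tsum_eq F

theorem tsum_enorm_add_natCast_sub_sq_le (h : ℤ → ℝ) (m : ℕ) :
    ∑' i : ℤ, ‖h (i + m) - h i‖ₑ ^ 2 ≤ (m : ENNReal) ^ 2 * ∑' i : ℤ, ‖h (i + 1) - h i‖ₑ ^ 2 := by
  have htelescope (i : ℤ) :
      h (i + m) - h i = ∑ k ∈ Finset.range m, (h (i + k + 1) - h (i + k)) := by
    simpa [add_assoc] using (Finset.sum_range_sub (fun k : ℕ => h (i + k)) m).symm
  calc ∑' i : ℤ, ‖h (i + m) - h i‖ₑ ^ 2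
      ≤ ∑' i : ℤ, m * ∑ k ∈ Finset.range m, ‖h (i + k + 1) - h (i + k)‖ₑ ^ 2 := by
        refine ENNReal.tsum_le_tsum fun i => ?_
        rw [htelescope]
        exact (enorm_sum_sq_le_card_mul_sum _ _).trans_eq (by rw [Finset.card_range])
    _ = m * ∑ k ∈ Finset.range m, ∑' i : ℤ, ‖h (i + k + 1) - h (i + k)‖ₑ ^ 2 := by
        rw [ENNReal.tsum_mul_left, Summable.tsum_finsetSum fun _ _ => ENNReal.summable]
    _ = (m : ENNReal) ^ 2 * ∑' i : ℤ, ‖h (i + 1) - h i‖ₑ ^ 2 := by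
        simp only [tsum_add_right_int fun i => ‖h (i + 1) - h i‖ₑ ^ 2, Finset.sum_const,
          Finset.card_range, nsmul_eq_mul]
        rw [← mul_assoc, ← sq]

-- To compare `(i, j)` with `(i + m, j)`, walk up by `m`, across by `m` and down by `m`.
theorem tsum_enorm_row_sub_sq_le (f : ℤ × ℤ → ℝ) (j : ℤ) (m : ℕ) :
    ∑' i : ℤ, ‖f (i + m, j) - f (i, j)‖ₑ ^ 2 ≤
      6 * ∑' i : ℤ, ‖f (i, j + m) - f (i, j)‖ₑ ^ 2 +
        3 * ((m : ENNReal) ^ 2 * ∑' i : ℤ, ‖f (i + 1, j + m) - f (i, j + m)‖ₑ ^ 2) := by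
  have hpath (i : ℤ) : ‖f (i + m, j) - f (i, j)‖ₑ ^ 2 ≤
      3 * (‖f (i, j + m) - f (i, j)‖ₑ ^ 2 + ‖f (i + m, j + m) - f (i, j + m)‖ₑ ^ 2 +
        ‖f (i + m, j + m) - f (i + m, j)‖ₑ ^ 2) := by
    rw [← enorm_neg (f (i + m, j + m) - f (i + m, j)), neg_sub]
    refine le_of_eq_of_le ?_ (enorm_add_add_sq_le _ _ _)
    ring_nf
  refine (ENNReal.tsum_le_tsum hpath).trans ?_
  rw [ENNReal.tsum_mul_left, ENNReal.tsum_add, ENNReal.tsum_add,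
    tsum_add_right_int fun i => ‖f (i, j + m) - f (i, j)‖ₑ ^ 2]
  calc _ = 6 * ∑' i : ℤ, ‖f (i, j + m) - f (i, j)‖ₑ ^ 2 +
        3 * ∑' i : ℤ, ‖f (i + m, j + m) - f (i, j + m)‖ₑ ^ 2 := by ring
    _ ≤ _ := by
        gcongr
        exact tsum_enorm_add_natCast_sub_sq_le (fun i => f (i, j + m)) m

/-- The quotient `(g p.1 - g p.2) / (p.1 - p.2)`, whose squares sum to the energy of the long-range
chain with range exponent `2`. It vanishes on the diagonal because `0⁻¹ = 0`. -/
def chainIncrement (p : ℤ × ℤ) : (ℤ → ℝ) →ₗ[ℝ] ℝ :=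
  ((p.1 - p.2 : ℤ) : ℝ)⁻¹ • ((LinearMap.proj p.1 : (ℤ → ℝ) →ₗ[ℝ] ℝ) - LinearMap.proj p.2)

theorem chainIncrement_apply (p : ℤ × ℤ) (g : ℤ → ℝ) :
    chainIncrement p g = (g p.1 - g p.2) / ((p.1 - p.2 : ℤ) : ℝ) :=
  inv_mul_eq_div _ _

theorem tsum_enorm_chainIncrement_sq (g : ℤ → ℝ) :
    ∑' p, ‖chainIncrement p g‖ₑ ^ 2 =
      2 * ∑' n : ℕ, ∑' i : ℤ, ‖(g (i + (n + 1 : ℕ)) - g i) / ((n : ℝ) + 1)‖ₑ ^ 2 := by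
  have hdistance : ∑' p, ‖chainIncrement p g‖ₑ ^ 2 =
      ∑' m : ℤ, ∑' i : ℤ, ‖(g (i + m) - g i) / (m : ℝ)‖ₑ ^ 2 := by
    rw [ENNReal.tsum_prod', ENNReal.tsum_comm (α := ℤ)]
    rw [ENNReal.tsum_comm (f := fun m i => ‖(g (i + m) - g i) / (m : ℝ)‖ₑ ^ 2)]
    refine tsum_congr fun i => ?_
    rw [← (Equiv.addLeft i).tsum_eq]
    refine tsum_congr fun m => ?_
    rw [chainIncrement_apply, Equiv.coe_addLeft, add_sub_cancel_left]
  have hneg (m : ℤ) : ∑' i : ℤ, ‖(g (i + -m) - g i) / ((-m : ℤ) : ℝ)‖ₑ ^ 2 =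
      ∑' i : ℤ, ‖(g (i + m) - g i) / (m : ℝ)‖ₑ ^ 2 := by
    rw [← tsum_add_right_int _ m]
    refine tsum_congr fun i => ?_
    rw [add_neg_cancel_right, Int.cast_neg, div_neg, ← neg_div, neg_sub]
  rw [hdistance, tsum_of_add_one_of_neg_add_one ENNReal.summable ENNReal.summable]
  simp only [hneg, Int.cast_zero, div_zero, enorm_zero, zero_pow two_ne_zero, tsum_zero, add_zero,
    two_mul]
  push_cast
  rfl

theorem tsum_enorm_row_sub_div_sq_le (f : ℤ × ℤ → ℝ) (j : ℤ) (n : ℕ) :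
    ∑' i : ℤ, ‖(f (i + (n + 1 : ℕ), j) - f (i, j)) / ((n : ℝ) + 1)‖ₑ ^ 2 ≤
      6 * ∑' i : ℤ, ‖(f (i, j + (n + 1 : ℕ)) - f (i, j)) / ((n : ℝ) + 1)‖ₑ ^ 2 +
        3 * ∑' i : ℤ, ‖f (i + 1, j + (n + 1 : ℕ)) - f (i, j + (n + 1 : ℕ))‖ₑ ^ 2 := by
  have hcancel : ‖((n : ℝ) + 1)⁻¹‖ₑ ^ 2 * ((n + 1 : ℕ) : ENNReal) ^ 2 = 1 := by
    rw [← mul_pow, ← Real.enorm_natCast, ← enorm_mul, Nat.cast_succ,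
      inv_mul_cancel₀ n.cast_add_one_ne_zero, enorm_one, one_pow]
  simp only [div_eq_inv_mul, enorm_mul, mul_pow, ENNReal.tsum_mul_left]
  refine (mul_le_mul_right (tsum_enorm_row_sub_sq_le f j (n + 1)) _).trans_eq ?_
  rw [mul_add, mul_left_comm _ 3, ← mul_assoc _ (_ ^ 2) (∑' _, _), hcancel, one_mul,
    mul_left_comm _ 6]

theorem tsum_enorm_column_sub_div_sq_le (f : ℤ × ℤ → ℝ) (j : ℤ) :
    ∑' n : ℕ, ∑' i : ℤ, ‖(f (i, j + (n + 1 : ℕ)) - f (i, j)) / ((n : ℝ) + 1)‖ₑ ^ 2 ≤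
      4 * ∑' v : ℤ × ℤ, ‖f (v.1, v.2 + 1) - f v‖ₑ ^ 2 := by
  rw [ENNReal.tsum_comm, ENNReal.tsum_prod', ← ENNReal.tsum_mul_left]
  refine ENNReal.tsum_le_tsum fun i => ?_
  have hhardy := tsum_enorm_sub_div_sq_le fun n : ℕ => f (i, j + n)
  have hinj : Function.Injective fun n : ℕ => j + (n : ℤ) :=
    (add_right_injective j).comp Nat.cast_injective
  have hcolumn :=
    ENNReal.tsum_comp_le_tsum_of_injective hinj fun k => ‖f (i, k + 1) - f (i, k)‖ₑ ^ 2
  simp only [Nat.cast_add, Nat.cast_one, Nat.cast_zero, add_zero, ← add_assoc] at hhardy ⊢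
  exact hhardy.trans (mul_le_mul_right hcolumn 4)

theorem tsum_enorm_rows_above_sub_sq_le (f : ℤ × ℤ → ℝ) (j : ℤ) :
    ∑' n : ℕ, ∑' i : ℤ, ‖f (i + 1, j + (n + 1 : ℕ)) - f (i, j + (n + 1 : ℕ))‖ₑ ^ 2 ≤
      ∑' v : ℤ × ℤ, ‖f (v.1 + 1, v.2) - f v‖ₑ ^ 2 := by
  rw [ENNReal.tsum_prod', ENNReal.tsum_comm (α := ℤ)]
  have hinj : Function.Injective fun n : ℕ => j + ((n + 1 : ℕ) : ℤ) :=
    (add_right_injective j).comp (Nat.cast_injective.comp (add_left_injective 1))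
  exact ENNReal.tsum_comp_le_tsum_of_injective hinj
    fun k => ∑' i : ℤ, ‖f (i + 1, k) - f (i, k)‖ₑ ^ 2

theorem tsum_enorm_chainIncrement_row_sq_le (f : ℤ × ℤ → ℝ) (j : ℤ) :
    ∑' p, ‖chainIncrement p fun i => f (i, j)‖ₑ ^ 2 ≤
      48 * (∑' v : ℤ × ℤ, ‖f (v.1 + 1, v.2) - f v‖ₑ ^ 2 +
        ∑' v : ℤ × ℤ, ‖f (v.1, v.2 + 1) - f v‖ₑ ^ 2) := by
  set horizontal := ∑' v : ℤ × ℤ, ‖f (v.1 + 1, v.2) - f v‖ₑ ^ 2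
  set vertical := ∑' v : ℤ × ℤ, ‖f (v.1, v.2 + 1) - f v‖ₑ ^ 2
  calc ∑' p, ‖chainIncrement p fun i => f (i, j)‖ₑ ^ 2
      ≤ 2 * (6 * ∑' n : ℕ, ∑' i : ℤ, ‖(f (i, j + (n + 1 : ℕ)) - f (i, j)) / ((n : ℝ) + 1)‖ₑ ^ 2 +
          3 * ∑' n : ℕ, ∑' i : ℤ,
            ‖f (i + 1, j + (n + 1 : ℕ)) - f (i, j + (n + 1 : ℕ))‖ₑ ^ 2) := by
        rw [tsum_enorm_chainIncrement_sq, ← ENNReal.tsum_mul_left (a := 6),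
          ← ENNReal.tsum_mul_left (a := 3), ← ENNReal.tsum_add]
        exact mul_le_mul_right (ENNReal.tsum_le_tsum (tsum_enorm_row_sub_div_sq_le f j)) 2
    _ ≤ 2 * (6 * (4 * vertical) + 3 * horizontal) := by
        gcongr
        · exact tsum_enorm_column_sub_div_sq_le f j
        · exact tsum_enorm_rows_above_sub_sq_le f j
    _ ≤ 2 * (6 * (4 * vertical) + 24 * horizontal) := by
        gcongr
        norm_num
    _ = 48 * (horizontal + vertical) := by ring

/-- The increment `f p.1 - f p.2` along a nearest-neighbour pair `p` of the square lattice, and `0`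
for all other pairs, so that the Dirichlet energy is a sum of squares over all pairs. -/
def gridIncrement (p : (ℤ × ℤ) × (ℤ × ℤ)) : (ℤ × ℤ → ℝ) →ₗ[ℝ] ℝ :=
  if |p.1.1 - p.2.1| + |p.1.2 - p.2.2| = 1 then
    (LinearMap.proj p.1 : (ℤ × ℤ → ℝ) →ₗ[ℝ] ℝ) - LinearMap.proj p.2
  else 0

theorem gridIncrement_apply (p : (ℤ × ℤ) × (ℤ × ℤ)) (f : ℤ × ℤ → ℝ) :
    gridIncrement p f =
      if |p.1.1 - p.2.1| + |p.1.2 - p.2.2| = 1 then f p.1 - f p.2 else 0 := by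
  rw [gridIncrement]
  split_ifs <;> rfl

theorem tsum_enorm_edges_sq_le (f : ℤ × ℤ → ℝ) :
    ∑' v : ℤ × ℤ, ‖f (v.1 + 1, v.2) - f v‖ₑ ^ 2 +
        ∑' v : ℤ × ℤ, ‖f (v.1, v.2 + 1) - f v‖ₑ ^ 2 ≤
      ∑' p, ‖gridIncrement p f‖ₑ ^ 2 := by
  let edge : (ℤ × ℤ) ⊕ (ℤ × ℤ) → (ℤ × ℤ) × (ℤ × ℤ) :=
    Sum.elim (fun v => ((v.1 + 1, v.2), v)) fun v => ((v.1, v.2 + 1), v)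
  have hedge : Function.Injective edge := by
    rintro (⟨a, b⟩ | ⟨a, b⟩) (⟨c, d⟩ | ⟨c, d⟩) h <;>
      simp only [edge, Sum.elim_inl, Sum.elim_inr, Prod.mk.injEq, Sum.inl.injEq, Sum.inr.injEq,
        reduceCtorEq] at h ⊢ <;>
      omega
  calc _ = ∑' s, ‖gridIncrement (edge s) f‖ₑ ^ 2 := by
        rw [Summable.tsum_sum ENNReal.summable ENNReal.summable]
        simp [edge, gridIncrement_apply]
    _ ≤ _ := ENNReal.tsum_comp_le_tsum_of_injective hedge fun p => ‖gridIncrement p f‖ₑ ^ 2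

theorem summable_and_tsum_le_of_tsum_enorm_sq_le {α β : Type*} {a : α → ℝ} {b : β → ℝ} {C : ℝ}
    (hC : 0 ≤ C) (hb : Summable fun q => b q ^ 2)
    (hle : ∑' p, ‖a p‖ₑ ^ 2 ≤ ENNReal.ofReal C * ∑' q, ‖b q‖ₑ ^ 2) :
    (Summable fun p => a p ^ 2) ∧ ∑' p, a p ^ 2 ≤ C * ∑' q, b q ^ 2 := by
  simp only [enorm_sq_eq_ofReal_sq] at hle
  rw [← ENNReal.ofReal_tsum_of_nonneg (fun _ => sq_nonneg _) hb, ← ENNReal.ofReal_mul hC] at hle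
  have ha : Summable fun p => a p ^ 2 := by
    simpa only [ENNReal.toReal_ofReal (sq_nonneg _)] using
      ENNReal.summable_toReal (ne_top_of_le_ne_top ENNReal.ofReal_ne_top hle)
  rw [← ENNReal.ofReal_tsum_of_nonneg (fun _ => sq_nonneg _) ha] at hle
  exact ⟨ha, (ENNReal.ofReal_le_ofReal_iff
    (mul_nonneg hC (tsum_nonneg fun _ => sq_nonneg _))).mp hle⟩

theorem summable_and_tsum_chainIncrement_row_sq_le {f : ℤ × ℤ → ℝ}
    (hf : Summable fun p => gridIncrement p f ^ 2) (j : ℤ) :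
    (Summable fun p => chainIncrement p (fun i => f (i, j)) ^ 2) ∧
      ∑' p, chainIncrement p (fun i => f (i, j)) ^ 2 ≤ 48 * ∑' p, gridIncrement p f ^ 2 := by
  refine summable_and_tsum_le_of_tsum_enorm_sq_le (by norm_num) hf ?_
  rw [ENNReal.ofReal_ofNat]
  exact (tsum_enorm_chainIncrement_row_sq_le f j).trans
    (mul_le_mul_right (tsum_enorm_edges_sq_le f) 48)

end TraceInequality

/-! ### Coercivity of the energies -/

section Coercivity

theorem sub_sq_le_sub_sq_mul_tsum_chainIncrement_sq {g : ℤ → ℝ}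
    (hg : Summable fun p => chainIncrement p g ^ 2) (k l : ℤ) :
    (g k - g l) ^ 2 ≤ ((k - l : ℤ) : ℝ) ^ 2 * ∑' p, chainIncrement p g ^ 2 := by
  rcases eq_or_ne k l with rfl | hkl
  · simp
  · have hkl' : ((k - l : ℤ) : ℝ) ≠ 0 := Int.cast_ne_zero.mpr (sub_ne_zero.mpr hkl)
    calc (g k - g l) ^ 2 = ((k - l : ℤ) : ℝ) ^ 2 * chainIncrement (k, l) g ^ 2 := by
          rw [chainIncrement_apply, ← mul_pow, mul_div_cancel₀ _ hkl']
      _ ≤ ((k - l : ℤ) : ℝ) ^ 2 * ∑' p, chainIncrement p g ^ 2 := by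
          gcongr
          exact hg.le_tsum (k, l) fun _ _ => sq_nonneg _

theorem sq_le_mul_tsum_chainIncrement_sq {g : ℤ → ℝ} {N : ℕ} (hgN : ∀ k : ℤ, N < |k| → g k = 0)
    (hg : Summable fun p => chainIncrement p g ^ 2) (k : ℤ) :
    g k ^ 2 ≤ (2 * N + 1) ^ 2 * ∑' p, chainIncrement p g ^ 2 := by
  rcases lt_or_ge (N : ℤ) |k| with hk | hk
  · rw [hgN k hk, zero_pow two_ne_zero]
    positivity
  · have hdist : ((k - (N + 1) : ℤ) : ℝ) ^ 2 ≤ (2 * N + 1) ^ 2 := by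
      obtain ⟨hk_ge, hk_le⟩ := abs_le.mp hk
      exact_mod_cast sq_le_sq' (show -(2 * (N : ℤ) + 1) ≤ k - (N + 1) by omega) (by omega)
    have hboundary : g (N + 1) = 0 := hgN _ (by rw [abs_of_nonneg] <;> omega)
    have hle := sub_sq_le_sub_sq_mul_tsum_chainIncrement_sq hg k (N + 1)
    rw [hboundary, sub_zero] at hle
    exact hle.trans (by gcongr)

theorem summable_gridIncrement_sq {f : ℤ × ℤ → ℝ} (hf : f.support.Finite) :
    Summable fun p => gridIncrement p f ^ 2 := by
  let step : (ℤ × ℤ) × (ℤ × ℤ) → (ℤ × ℤ) × (ℤ × ℤ) := fun q => (q.1, q.1 + q.2)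
  let nearSupport := step '' (f.support ×ˢ Set.Icc (-1, -1) (1, 1))
  have hfinite : nearSupport.Finite := (hf.prod (Set.finite_Icc _ _)).image step
  refine summable_of_hasFiniteSupport ((hfinite.union (hfinite.image Prod.swap)).subset ?_)
  have hnear (v w : ℤ × ℤ) (hvw : |v.1 - w.1| + |v.2 - w.2| = 1) (hv : f v ≠ 0) :
      (v, w) ∈ nearSupport := by
    refine ⟨(v, w - v), ⟨hv, ?_⟩, by simp [step]⟩
    simp only [Set.mem_Icc, Prod.le_def, Prod.fst_sub, Prod.snd_sub]
    grind
  rintro ⟨v, w⟩ hvw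
  rw [Function.mem_support, pow_ne_zero_iff two_ne_zero, gridIncrement_apply, ite_ne_right_iff]
    at hvw
  obtain ⟨hadj, hne⟩ := hvw
  rcases eq_or_ne (f v) 0 with hv | hv
  · have hw : f w ≠ 0 := fun hw => hne (by simp only [hv, hw, sub_zero])
    exact Or.inr ⟨(w, v), hnear w v (by rw [← hadj, abs_sub_comm, abs_sub_comm w.2]) hw, rfl⟩
  · exact Or.inl (hnear v w hadj hv)

theorem sq_le_mul_tsum_gridIncrement_sq {f : ℤ × ℤ → ℝ} {N : ℕ}
    (hfN : ∀ v : ℤ × ℤ, N < |v.1| → f v = 0) (hf : Summable fun p => gridIncrement p f ^ 2)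
    (v : ℤ × ℤ) : f v ^ 2 ≤ (2 * N + 1) ^ 2 * 48 * ∑' p, gridIncrement p f ^ 2 := by
  obtain ⟨hrow, htrace⟩ := summable_and_tsum_chainIncrement_row_sq_le hf v.2
  calc f v ^ 2 ≤ (2 * N + 1) ^ 2 * ∑' p, chainIncrement p (fun i => f (i, v.2)) ^ 2 :=
        sq_le_mul_tsum_chainIncrement_sq (g := fun i => f (i, v.2)) (fun k hk => hfN (k, v.2) hk)
          hrow v.1
    _ ≤ (2 * N + 1) ^ 2 * (48 * ∑' p, gridIncrement p f ^ 2) := by gcongr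
    _ = (2 * N + 1) ^ 2 * 48 * ∑' p, gridIncrement p f ^ 2 := (mul_assoc _ _ _).symm

end Coercivity

/-! ### The lattice of field configurations -/

section VanishingOn

variable {α : Type*}

/-- The `R`-valued functions on `α` vanishing on `T`. For `R = ℤ` these are the configurations of a
height model with zero boundary condition on `T`; for `R = ℝ` they form the space on which the
energy is a quadratic form. -/
def vanishingOn (R : Type*) [Ring R] (T : Set α) : Submodule R (α → R) where
  carrier := {f | ∀ a ∈ T, f a = 0}
  add_mem' hf hg a ha := by rw [Pi.add_apply, hf a ha, hg a ha, add_zero]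
  zero_mem' _ _ := rfl
  smul_mem' c f hf a ha := by rw [Pi.smul_apply, hf a ha, smul_zero]

instance (T : Set α) : IsAddTorsionFree (vanishingOn ℤ T) :=
  Subtype.val_injective.isAddTorsionFree (vanishingOn ℤ T).subtype.toAddMonoidHom

theorem support_finite_of_mem_vanishingOn {R : Type*} [Ring R] {T : Set α} (hT : Tᶜ.Finite)
    {f : α → R} (hf : f ∈ vanishingOn R T) : f.support.Finite :=
  hT.subset fun a hfa ha => hfa (hf a ha)

theorem finiteDimensional_vanishingOn {T : Set α} (hT : Tᶜ.Finite) :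
    FiniteDimensional ℝ (vanishingOn ℝ T) := by
  have : Finite ↥Tᶜ := hT
  refine FiniteDimensional.of_injective
    (LinearMap.funLeft ℝ ℝ (Subtype.val : ↥Tᶜ → α) ∘ₗ (vanishingOn ℝ T).subtype) ?_
  intro f g hfg
  refine Subtype.ext (funext fun a => ?_)
  by_cases ha : a ∈ T
  · rw [f.2 a ha, g.2 a ha]
  · exact congrFun hfg ⟨a, ha⟩

/-- The inclusion of the lattice of integer-valued functions vanishing on `T` into the space of
real-valued ones. -/
def vanishingOnIntCast (T : Set α) : vanishingOn ℤ T →+ vanishingOn ℝ T where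
  toFun φ := ⟨fun a => (φ.1 a : ℝ), fun a ha => Int.cast_eq_zero.mpr (φ.2 a ha)⟩
  map_zero' := Subtype.ext (funext fun _ => Int.cast_zero)
  map_add' _ _ := Subtype.ext (funext fun _ => Int.cast_add _ _)

/-- The height at the site `a`, as a real-valued homomorphism on the lattice of integer-valued
functions vanishing on `T`. -/
def vanishingOnHeight (T : Set α) (a : α) : vanishingOn ℤ T →+ ℝ where
  toFun φ := (φ.1 a : ℝ)
  map_zero' := Int.cast_zero
  map_add' _ _ := Int.cast_add _ _

end VanishingOn

section FieldForms

variable (N : ℕ)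

theorem finite_rect : (rect N).Finite :=
  ((Set.finite_Icc (-(N : ℤ)) N).prod (Set.finite_Icc (-(2 * N : ℤ)) (2 * N))).subset
    fun _ hv => ⟨abs_le.mp hv.1, abs_le.mp hv.2⟩

/-- The sites of the rectangle `Λ_N` that do not lie on the line `ℤ × {0}`. -/
def offLine : Set (ℤ × ℤ) :=
  {v | v ∈ rect N ∧ v.2 ≠ 0}

instance : Fintype (offLine N) :=
  ((finite_rect N).subset fun _ hv => hv.1).fintype

variable {N}

theorem summable_gridIncrement_sq_of_mem {f : ℤ × ℤ → ℝ} (hf : f ∈ vanishingOn ℝ (rect N)ᶜ) :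
    Summable fun p => gridIncrement p f ^ 2 :=
  summable_gridIncrement_sq
    (support_finite_of_mem_vanishingOn ((compl_compl (rect N)).symm ▸ finite_rect N) hf)

variable (N)

/-- The Dirichlet energy of the two-dimensional field, summed over ordered pairs of neighbours. -/
def gridForm : QuadraticForm ℝ (vanishingOn ℝ (rect N)ᶜ) :=
  sumSqForm (fun p => gridIncrement p ∘ₗ (vanishingOn ℝ (rect N)ᶜ).subtype)
    fun f => summable_gridIncrement_sq_of_mem f.2

/-- The long-range chain energy of the restriction of the two-dimensional field to the line
`ℤ × {0}`. -/
def lineForm : QuadraticForm ℝ (vanishingOn ℝ (rect N)ᶜ) :=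
  sumSqForm
    (fun p => chainIncrement p ∘ₗ LinearMap.funLeft ℝ ℝ (fun i => (i, 0)) ∘ₗ
      (vanishingOn ℝ (rect N)ᶜ).subtype)
    fun f => (summable_and_tsum_chainIncrement_row_sq_le (summable_gridIncrement_sq_of_mem f.2) 0).1

/-- The sum of the squared heights off the line `ℤ × {0}`. -/
def offLineForm : QuadraticForm ℝ (vanishingOn ℝ (rect N)ᶜ) :=
  sumSqForm (fun v : offLine N => LinearMap.proj v.1 ∘ₗ (vanishingOn ℝ (rect N)ᶜ).subtype)
    fun _ => (hasSum_fintype _).summable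

variable {N}

theorem gridForm_apply (f : vanishingOn ℝ (rect N)ᶜ) :
    gridForm N f = ∑' p, gridIncrement p f.1 ^ 2 :=
  sumSqForm_apply _ _ f

theorem lineForm_apply (f : vanishingOn ℝ (rect N)ᶜ) :
    lineForm N f = ∑' p, chainIncrement p (fun i => f.1 (i, 0)) ^ 2 :=
  sumSqForm_apply _ _ f

theorem offLineForm_apply (f : vanishingOn ℝ (rect N)ᶜ) :
    offLineForm N f = ∑ v : offLine N, f.1 v.1 ^ 2 :=
  (sumSqForm_apply _ _ f).trans (tsum_fintype _)

theorem lineForm_le_gridForm (f : vanishingOn ℝ (rect N)ᶜ) : lineForm N f ≤ 48 * gridForm N f := by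
  rw [lineForm_apply, gridForm_apply]
  exact (summable_and_tsum_chainIncrement_row_sq_le (summable_gridIncrement_sq_of_mem f.2) 0).2

variable (N) in
theorem exists_pos_mul_offLineForm_le_gridForm :
    ∃ ε : ℝ, 0 < ε ∧ ∀ f : vanishingOn ℝ (rect N)ᶜ, ε * offLineForm N f ≤ gridForm N f := by
  simp only [offLineForm_apply]
  refine exists_pos_mul_sum_sq_le (C := (2 * N + 1) ^ 2 * 48) (by positivity)
    (fun f => ?_) fun f v => ?_
  · rw [gridForm_apply]
    exact tsum_nonneg fun _ => sq_nonneg _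
  · rw [gridForm_apply]
    exact sq_le_mul_tsum_gridIncrement_sq (fun v hv => f.2 v fun hrect => hv.not_ge hrect.1)
      (summable_gridIncrement_sq_of_mem f.2) v.1

theorem energy2D_eq_gridForm (β : ℝ) (φ : vanishingOn ℤ (rect N)ᶜ) :
    energy2D β φ.1 = β / 2 * gridForm N (vanishingOnIntCast _ φ) := by
  rw [gridForm_apply, energy2D, ← mul_assoc, mul_one_div]
  congr 1
  refine tsum_congr fun p => ?_
  rw [gridIncrement_apply, ite_pow, zero_pow two_ne_zero, Int.cast_sub]
  rfl

end FieldForms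

/-! ### Splitting the field along the line -/

section ChainEnergy

variable {N : ℕ}

/-- A field configuration is a chain configuration on the line `ℤ × {0}` together with arbitrary
heights at the remaining sites of the rectangle. -/
def splitLine (N : ℕ) : vanishingOn ℤ (rect N)ᶜ ≃ ChainConfig N × (offLine N → ℤ) where
  toFun φ := (⟨fun k => φ.1 (k, 0), fun k hk => φ.2 (k, 0) fun hrect => hk.not_ge hrect.1⟩,
    fun v => φ.1 v.1)
  invFun ψ := ⟨fun v => if v.2 = 0 then ψ.1.1 v.1 else
      open Classical in if hv : v ∈ offLine N then ψ.2 ⟨v, hv⟩ else 0, by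
    intro v hv
    dsimp only
    split_ifs with hline hoff
    · refine ψ.1.2 v.1 (lt_of_not_ge fun hle => hv ⟨hle, ?_⟩)
      rw [hline, abs_zero]
      positivity
    · exact absurd hoff.1 hv
    · rfl⟩
  left_inv φ := by
    refine Subtype.ext (funext fun v => ?_)
    dsimp only
    split_ifs with hline hoff
    · rw [← hline]
    · rfl
    · exact (φ.2 v fun hrect => hoff ⟨hrect, hline⟩).symm
  right_inv ψ := by
    refine Prod.ext (Subtype.ext (funext fun k => ?_)) (funext fun v => ?_) <;> dsimp only
    · exact if_pos rfl
    · rw [if_neg v.2.2, dif_pos v.2]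

theorem chainEnergy_two_two (β : ℝ) (φ : ℤ → ℤ) :
    chainEnergy β 2 2 φ = β * ∑' p, chainIncrement p (fun k => (φ k : ℝ)) ^ 2 := by
  rw [chainEnergy]
  congr 1
  refine tsum_congr fun p => ?_
  rw [chainIncrement_apply, div_pow]
  split_ifs with hp
  · rw [hp, sub_self, zero_pow two_ne_zero, zero_div]
  · rw [Real.rpow_two, Real.rpow_two, sq_abs, sq_abs, Int.cast_sub (φ p.1)]

theorem summable_chainIncrement_sq (φ : ChainConfig N) :
    Summable fun p => chainIncrement p (fun k => (φ.1 k : ℝ)) ^ 2 := by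
  let ψ := (splitLine N).symm (φ, 0)
  have hψ (k : ℤ) : ψ.1 (k, 0) = φ.1 k :=
    congrFun (congrArg (fun x => x.1.1) ((splitLine N).apply_symm_apply (φ, 0))) k
  have hrow := (summable_and_tsum_chainIncrement_row_sq_le
    (summable_gridIncrement_sq_of_mem (vanishingOnIntCast _ ψ).2) 0).1
  simpa only [vanishingOnIntCast, AddMonoidHom.coe_mk, ZeroHom.coe_mk, hψ] using hrow

theorem sq_le_mul_chainEnergy {β : ℝ} (hβ : 0 < β) (φ : ChainConfig N) (k : ℤ) :
    (φ.1 k : ℝ) ^ 2 ≤ (2 * N + 1) ^ 2 / β * chainEnergy β 2 2 φ.1 := by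
  rw [chainEnergy_two_two, ← mul_assoc, div_mul_cancel₀ _ hβ.ne']
  exact sq_le_mul_tsum_chainIncrement_sq (fun k hk => Int.cast_eq_zero.mpr (φ.2 k hk))
    (summable_chainIncrement_sq φ) k

theorem summable_exp_neg_chainEnergy (N : ℕ) {β : ℝ} (hβ : 0 < β) :
    Summable fun φ : ChainConfig N => Real.exp (-chainEnergy β 2 2 φ.1) := by
  have hnonneg (φ : ChainConfig N) : 0 ≤ chainEnergy β 2 2 φ.1 := by
    rw [chainEnergy_two_two]
    exact mul_nonneg hβ.le (tsum_nonneg fun _ => sq_nonneg _)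
  obtain ⟨ε, hε, hcoercive⟩ := exists_pos_mul_sum_sq_le
    (r := fun (φ : ChainConfig N) (k : Set.Icc (-(N : ℤ)) N) => (φ.1 k.1 : ℝ))
    (by positivity) hnonneg fun φ k => sq_le_mul_chainEnergy hβ φ k
  refine summable_exp_neg_of_mul_sum_sq_le hε (fun φ ψ hφψ => Subtype.ext (funext fun k => ?_))
    hcoercive
  rcases lt_or_ge (N : ℤ) |k| with hk | hk
  · rw [φ.2 k hk, ψ.2 k hk]
  · exact congrFun hφψ ⟨k, abs_le.mp hk⟩

theorem summable_sq_mul_exp_neg_chainEnergy (N : ℕ) {β : ℝ} (hβ : 0 < β) (k : ℤ) :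
    Summable fun φ : ChainConfig N => (φ.1 k : ℝ) ^ 2 * Real.exp (-chainEnergy β 2 2 φ.1) := by
  refine summable_sq_mul_exp_neg_of_sq_le (fun φ => sq_le_mul_chainEnergy hβ φ k) (by positivity) ?_
  have hhalf (φ : ChainConfig N) : chainEnergy (β / 2) 2 2 φ.1 = chainEnergy β 2 2 φ.1 / 2 := by
    simp only [chainEnergy_two_two, div_mul_eq_mul_div]
  simpa only [hhalf] using summable_exp_neg_chainEnergy N (half_pos hβ)

end ChainEnergy

section Comparison

theorem chainEnergy_neg (β α q : ℝ) (φ : ℤ → ℤ) : chainEnergy β α q (-φ) = chainEnergy β α q φ := by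
  refine congrArg (β * ·) (tsum_congr fun p => ?_)
  rw [Pi.neg_apply, Pi.neg_apply, ← neg_sub', Int.cast_neg, abs_neg]

theorem tsum_eq_zero_of_odd {G : Type*} [AddGroup G] {F : G → ℝ} (hF : ∀ x, F (-x) = -F x) :
    ∑' x, F x = 0 := by
  have hneg := (Equiv.neg G).tsum_eq F
  simp only [Equiv.neg_apply, hF, tsum_neg] at hneg
  exact self_eq_neg.mp hneg.symm

theorem chainMean_eq_zero (N : ℕ) (β α q : ℝ) : chainMean N β α q = 0 := by
  refine div_eq_zero_iff.mpr (Or.inl ?_)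
  refine tsum_eq_zero_of_odd (G := vanishingOn ℤ {k : ℤ | (N : ℤ) < |k|})
    (F := fun φ => (φ.1 0 : ℝ) * chainWeight β α q φ.1) fun φ => ?_
  simp only [chainWeight, Submodule.coe_neg, chainEnergy_neg, Pi.neg_apply, Int.cast_neg, neg_mul]

theorem chainVar_eq_gibbsSecondMoment (N : ℕ) (β α q : ℝ) :
    chainVar N β α q = gibbsSecondMoment (fun φ : ChainConfig N => chainEnergy β α q φ.1)
      fun φ => (φ.1 0 : ℝ) := by
  rw [chainVar, chainMean_eq_zero, zero_pow two_ne_zero, sub_zero]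
  rfl

theorem var2D_le_gibbsSecondMoment (N : ℕ) (β : ℝ) :
    var2D N β ≤ gibbsSecondMoment (fun φ : vanishingOn ℤ (rect N)ᶜ => energy2D β φ.1)
      (vanishingOnHeight _ (0, 0)) :=
  sub_le_self _ (sq_nonneg _)

/-- The chain energy on the line plus independent Gaussian energies of inverse temperature `ε` at
the sites off the line. -/
def decoupledForm (N : ℕ) (β ε : ℝ) : QuadraticForm ℝ (vanishingOn ℝ (rect N)ᶜ) :=
  β • lineForm N + ε • offLineForm N

theorem decoupledForm_intCast (N : ℕ) (β ε : ℝ) (φ : vanishingOn ℤ (rect N)ᶜ) :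
    decoupledForm N β ε (vanishingOnIntCast _ φ) =
      chainEnergy β 2 2 (splitLine N φ).1.1 + ε * ∑ v, ((splitLine N φ).2 v : ℝ) ^ 2 := by
  rw [chainEnergy_two_two, decoupledForm, add_apply, smul_apply,
    smul_apply, lineForm_apply, offLineForm_apply]
  rfl

theorem exists_pos_decoupledForm_le_gridForm (N : ℕ) {β : ℝ} (hβ : 0 < β) :
    ∃ ε : ℝ, 0 < ε ∧ ∀ f, decoupledForm N β ε f ≤ ((96 * β) • gridForm N) f := by
  obtain ⟨ε, hε, hoff⟩ := exists_pos_mul_offLineForm_le_gridForm N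
  refine ⟨48 * β * ε, by positivity, fun f => ?_⟩
  calc decoupledForm N β (48 * β * ε) f
      = β * lineForm N f + 48 * β * (ε * offLineForm N f) := by
        rw [← mul_assoc]
        rfl
    _ ≤ β * (48 * gridForm N f) + 48 * β * gridForm N f := by
        gcongr
        · exact lineForm_le_gridForm f
        · exact hoff f
    _ = ((96 * β) • gridForm N) f := by
        rw [smul_apply, smul_eq_mul]
        ring

theorem summable_exp_neg_decoupledForm (N : ℕ) {β ε : ℝ} (hβ : 0 < β) (hε : 0 < ε) :
    Summable fun φ => Real.exp (-decoupledForm N β ε (vanishingOnIntCast _ φ)) := by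
  simp only [decoupledForm_intCast]
  exact (splitLine N).summable_iff.mpr
    (summable_exp_neg_add_prod (summable_exp_neg_chainEnergy N hβ) (summable_exp_neg_mul_sum_sq hε))

theorem summable_sq_mul_exp_neg_decoupledForm (N : ℕ) {β ε : ℝ} (hβ : 0 < β) (hε : 0 < ε) :
    Summable fun φ => vanishingOnHeight _ (0, 0) φ ^ 2 *
      Real.exp (-decoupledForm N β ε (vanishingOnIntCast _ φ)) := by
  simp only [decoupledForm_intCast]
  exact (splitLine N).summable_iff.mpr (summable_sq_mul_exp_neg_add_prod
    (summable_sq_mul_exp_neg_chainEnergy N hβ 0) (summable_exp_neg_mul_sum_sq hε))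

theorem gibbsSecondMoment_decoupledForm (N : ℕ) {β ε : ℝ} (hβ : 0 < β) (hε : 0 < ε) :
    gibbsSecondMoment (fun φ => decoupledForm N β ε (vanishingOnIntCast _ φ))
        (vanishingOnHeight _ (0, 0)) =
      gibbsSecondMoment (fun φ : ChainConfig N => chainEnergy β 2 2 φ.1) fun φ => (φ.1 0 : ℝ) := by
  simp only [decoupledForm_intCast]
  exact (gibbsSecondMoment_comp_equiv (splitLine N)
    (fun ψ => chainEnergy β 2 2 ψ.1.1 + ε * ∑ v, (ψ.2 v : ℝ) ^ 2) fun ψ => (ψ.1.1 0 : ℝ)).trans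
    (gibbsSecondMoment_add_prod (summable_exp_neg_chainEnergy N hβ)
      (summable_sq_mul_exp_neg_chainEnergy N hβ 0) (summable_exp_neg_mul_sum_sq hε))

theorem gibbsSecondMoment_energy2D_le (N : ℕ) {β : ℝ} (hβ : 0 < β) :
    gibbsSecondMoment (fun φ : vanishingOn ℤ (rect N)ᶜ => energy2D (192 * β) φ.1)
        (vanishingOnHeight _ (0, 0)) ≤
      gibbsSecondMoment (fun φ : ChainConfig N => chainEnergy β 2 2 φ.1) fun φ => (φ.1 0 : ℝ) := by
  obtain ⟨ε, hε, hle⟩ := exists_pos_decoupledForm_le_gridForm N hβ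
  have hfinite : FiniteDimensional ℝ (vanishingOn ℝ (rect N)ᶜ) :=
    finiteDimensional_vanishingOn ((compl_compl (rect N)).symm ▸ finite_rect N)
  have henergy (φ : vanishingOn ℤ (rect N)ᶜ) :
      energy2D (192 * β) φ.1 = ((96 * β) • gridForm N) (vanishingOnIntCast _ φ) := by
    rw [energy2D_eq_gridForm, smul_apply, smul_eq_mul]
    ring
  simp only [henergy, ← gibbsSecondMoment_decoupledForm N hβ hε]
  exact gibbsSecondMoment_anti _ _ hle (summable_exp_neg_decoupledForm N hβ hε)
    (summable_sq_mul_exp_neg_decoupledForm N hβ hε)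

end Comparison

end

/-- **Dimensional reduction for the Gaussian chain at `α = 2`.**
There exists a constant `C₀ ∈ (1,∞)` such that for every inverse temperature
`β ∈ (0,∞)` and every integer `N ≥ 1`, the variance of the height at the origin of the
two-dimensional integer-valued Gaussian free field on `Λ_N` at inverse temperature
`C₀β` is bounded above by the variance of the height at the origin of the discrete
Gaussian long-range chain of length `N` with range exponent `2` at inverse
temperature `β`. -/
theorem twoD_gff_dominated_by_gaussian_chain :
    ∃ C₀ : ℝ, 1 < C₀ ∧
      ∀ β : ℝ, 0 < β → ∀ N : ℕ, 1 ≤ N →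
        var2D N (C₀ * β) ≤ chainVar N β 2 2 := by
  refine ⟨192, by norm_num, fun β hβ N _ => ?_⟩
  calc var2D N (192 * β)
      ≤ gibbsSecondMoment (fun φ : vanishingOn ℤ (rect N)ᶜ => energy2D (192 * β) φ.1)
          (vanishingOnHeight _ (0, 0)) := var2D_le_gibbsSecondMoment N (192 * β)
    _ ≤ gibbsSecondMoment (fun φ : ChainConfig N => chainEnergy β 2 2 φ.1)
          fun φ => (φ.1 0 : ℝ) := gibbsSecondMoment_energy2D_le N hβ
    _ = chainVar N β 2 2 := (chainVar_eq_gibbsSecondMoment N β 2 2).symm
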